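/- Let w be an element of the commutator subgroup [F₂,F₂] of the free group F₂ on two generators, let α ∈ ℂ with α ≠ 2 and α ≠ −2, and let g = y_α = [[α, 1], [−1, 0]] ∈ SL(2,ℂ). Suppose (x, y) and (x₁, y₁) are pairs in SL(2,ℂ)² with w(x,y) = g and w(x₁,y₁) = g, and suppose there is a lower-triangular matrix z ∈ SL(2,ℂ) with z·x·z⁻¹ = x₁ and z·y·z⁻¹ = y₁. Then x = x₁ and y = y₁. -/

import Mathlib

open Matrix

abbrev SL2C := Matrix.SpecialLinearGroup (Fin 2) ℂ

noncomputable def tr2 (x : SL2C) : ℂ := Matrix.trace (x : Matrix (Fin 2) (Fin 2) ℂ)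

/-- The evaluation of a word `w` in the free group on two generators at a pair
of matrices `x y ∈ SL(2,ℂ)`. -/
noncomputable def wordEval (w : FreeGroup (Fin 2)) (x y : SL2C) : SL2C :=
  FreeGroup.lift ![x, y] w

/-- The matrix `y_α = [[α,1],[-1,0]]` as an element of `SL(2,ℂ)`. -/
noncomputable def ySL (t : ℂ) : SL2C :=
  ⟨!![t, 1; -1, 0], by simp [Matrix.det_fin_two_of]⟩

/-! Two solutions of `w = g` that are conjugate by `z` force `z` to commute with `g`. If `z` is
lower triangular, the first rows of `z * g = g * z` say that `g 0 1` annihilates both `z 1 0` and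
`z 1 1 - z 0 0`; when `g 0 1` is regular, `z` is therefore a scalar matrix, and conjugation by it
is trivial. -/

theorem freeGroup_lift_conj {ι G : Type*} [Group G] (z : G) (f : ι → G) (w : FreeGroup ι) :
    FreeGroup.lift (fun i ↦ z * f i * z⁻¹) w = z * FreeGroup.lift f w * z⁻¹ := by
  have h : FreeGroup.lift (fun i ↦ z * f i * z⁻¹) =
      (MulAut.conj z).toMonoidHom.comp (FreeGroup.lift f) := by
    ext i
    simp
  exact DFunLike.congr_fun h w

section CommRing

open scoped MatrixGroups

variable {R : Type*} [CommRing R]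

theorem mem_center_of_commute_of_lower_triangular {z g : SL(2, R)}
    (hz : z 0 1 = 0) (hg : IsRegular (g 0 1)) (hcomm : Commute z g) :
    z ∈ Subgroup.center SL(2, R) := by
  have hmul : (z : Matrix (Fin 2) (Fin 2) R) * g = g * z := congrArg Subtype.val hcomm.eq
  have h₀₀ : z 0 0 * g 0 0 = g 0 0 * z 0 0 + g 0 1 * z 1 0 := by
    simpa [mul_apply, hz] using congrFun₂ hmul 0 0
  have h₀₁ : z 0 0 * g 0 1 = g 0 1 * z 1 1 := by
    simpa [mul_apply, hz] using congrFun₂ hmul 0 1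
  have hlower : z 1 0 = 0 := hg.left (by linear_combination -h₀₀)
  have hdiag : z 1 1 = z 0 0 := hg.left (by linear_combination -h₀₁)
  have hscalar : scalar (Fin 2) (z 0 0) = z := by
    ext i j
    fin_cases i <;> fin_cases j <;> simp [hz, hlower, hdiag]
  have hdet : z 0 0 ^ 2 = 1 := calc
    z 0 0 ^ 2 = (scalar (Fin 2) (z 0 0)).det := by simp
    _ = 1 := by rw [hscalar, z.det_coe]
  exact Matrix.SpecialLinearGroup.mem_center_iff.mpr ⟨z 0 0, hdet, hscalar⟩

theorem lower_triangular_conjugate_solutions_eq_general {ι : Type*} {w : FreeGroup ι}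
    {g z : SL(2, R)} {f f₁ : ι → SL(2, R)}
    (hg : IsRegular (g 0 1)) (hf : FreeGroup.lift f w = g) (hf₁ : FreeGroup.lift f₁ w = g)
    (hz : z 0 1 = 0) (hconj : ∀ i, z * f i * z⁻¹ = f₁ i) :
    f = f₁ := by
  obtain rfl : (fun i ↦ z * f i * z⁻¹) = f₁ := funext hconj
  have hcomm : Commute z g := by
    rw [freeGroup_lift_conj, hf] at hf₁
    exact mul_inv_eq_iff_eq_mul.mp hf₁
  have hcenter := mem_center_of_commute_of_lower_triangular hz hg hcomm
  funext i
  exact eq_mul_inv_of_mul_eq (Subgroup.mem_center_iff.mp hcenter (f i))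

end CommRing

/-- for `w ∈ [F₂,F₂]`, `α ≠ ±2` and `g = y_α`, two solutions of
`w(x,y) = g` that are conjugate by a lower-triangular matrix must be equal. -/
theorem lower_triangular_conjugate_solutions_eq (w : FreeGroup (Fin 2))
    (hw : w ∈ commutator (FreeGroup (Fin 2)))
    (α : ℂ) (hα : α ≠ 2) (hα' : α ≠ -2)
    (x y x₁ y₁ : SL2C)
    (hxy : wordEval w x y = ySL α) (hxy₁ : wordEval w x₁ y₁ = ySL α)
    (z : SL2C) (hz : (z : Matrix (Fin 2) (Fin 2) ℂ) 0 1 = 0)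
    (hzx : z * x * z⁻¹ = x₁) (hzy : z * y * z⁻¹ = y₁) :
    x = x₁ ∧ y = y₁ := by
  have h : ![x, y] = ![x₁, y₁] := lower_triangular_conjugate_solutions_eq_general
    (by simp [ySL, isRegular_one]) hxy hxy₁ hz (by simp [Fin.forall_fin_two, hzx, hzy])
  simpa using h
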